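/- Let k be any field, R = k[t,u,x,y]/(xy − tu − 1) the coordinate ring of SL₂, and ρ₁* : R → k[s,t] the k-algebra homomorphism induced by t ↦ t, u ↦ s, x ↦ 1, y ↦ 1 + st (the comorphism of the standard embedding ρ₁ : 𝔸² ↪ SL₂, (s,t) ↦ ((1,t),(s,1+st))). Let φ be a k-algebra automorphism of k[s,t] and set f = φ(s), g = φ(t). Then there exists a k-algebra automorphism Φ of R with φ ∘ ρ₁* = ρ₁* ∘ Φ (i.e., the automorphism of 𝔸² corresponding to φ extends to an automorphism of SL₂ via ρ₁) if and only if the Jacobian determinant (∂f/∂s)(∂g/∂t) − (∂f/∂t)(∂g/∂s), which is a nonzero element of k, equals 1 or −1. -/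

import Mathlib

open MvPolynomial

noncomputable section

variable (k : Type*) [Field k]

/-- The polynomial `x*y - t*u - 1` defining `SL₂` inside `𝔸⁴ = Spec k[t,u,x,y]`
(variables: `0 = t`, `1 = u`, `2 = x`, `3 = y`). -/
def sl2Rel : MvPolynomial (Fin 4) k := X 2 * X 3 - X 0 * X 1 - 1

/-- The coordinate ring `R = k[t,u,x,y]/(xy - tu - 1)` of `SL₂`. -/
abbrev SL2Ring : Type _ := MvPolynomial (Fin 4) k ⧸ Ideal.span {sl2Rel k}

/-- The comorphism of the standard embedding `ρ₁ : 𝔸² ↪ SL₂`, on the level of the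
ambient polynomial ring: `t ↦ t`, `u ↦ s`, `x ↦ 1`, `y ↦ 1 + s*t`
(in `k[s,t]`, variables `0 = s`, `1 = t`). -/
def rho1Aux : MvPolynomial (Fin 4) k →ₐ[k] MvPolynomial (Fin 2) k :=
  aeval ![X 1, X 0, 1, 1 + X 0 * X 1]

lemma rho1Aux_rel : rho1Aux k (sl2Rel k) = 0 := by
  simp [rho1Aux, sl2Rel]
  ring

/-- The comorphism `ρ₁* : R → k[s,t]` of the standard embedding `ρ₁ : 𝔸² ↪ SL₂`,
`(s,t) ↦ ((1,t),(s,1+st))`; it is induced by `t ↦ t`, `u ↦ s`, `x ↦ 1`, `y ↦ 1 + st`. -/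
def rho1Star : SL2Ring k →ₐ[k] MvPolynomial (Fin 2) k :=
  Ideal.Quotient.liftₐ _ (rho1Aux k) (by
    intro a ha
    rw [Ideal.mem_span_singleton] at ha
    obtain ⟨c, rfl⟩ := ha
    rw [map_mul, rho1Aux_rel]
    simp)

/-!
Let `Φ` extend `φ`. It preserves the ideal `(x - 1)` of the plane, and as all units of `R` are
constant, it maps `x - 1` to a scalar multiple; looking at the fibre `x = 0`, the only one that is
not a plane, one gets `Φ x = x`. Conjugating the `𝔾ₐ`-action `u ↦ u + ax`, `y ↦ y + at` by `Φ`
yields a nontrivial deformation of the identity of `R` over the `x`-line that leaves `Φ t`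
invariant. Suppose `Φ t ∉ k[x, u, t]`. Then `x ^ n * Φ t = (1 + ut) q(u, t) + x g` with `n ≥ 1` and
`q ≠ 0`. The parameter `a` can be given a size for which, in the Gauss norm extending the `x`-adic
absolute value, `ut` is deformed to an element of size slightly more than `1`. Then `x g` and the
left-hand side stay bounded by `1`, whereas `(1 + ut) q` does not: a contradiction. So `Φ`, and
likewise its inverse, preserves `k[x, u, t]`, and its Jacobian relative to `x` is a constant `j`.
At `x = 1` this is the Jacobian of `φ`. At `x = 0` one obtains a pair `(p, q)` of Jacobian `j` with
`1 + pq` associated to `1 + st`, hence `pq = st` and `j = ±1`.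

Conversely, an automorphism `φ` that is tangent to the identity at the origin extends: conjugating
it by the scaling `(s, t) ↦ (xs, xt)` gives an automorphism over the `x`-line which is congruent to
the identity modulo `x`. Shears and the transposition of matrices extend the affine automorphisms of
determinant `±1`, which reduce the general case to this one.
-/

section PolynomialMaps

variable {R S σ τ : Type*} [CommRing R] [CommRing S] [Algebra R S]

lemma dvd_aeval_sub_aeval {d : S} {v w : σ → S} (h : ∀ i, d ∣ v i - w i) (p : MvPolynomial σ R) :
    d ∣ aeval v p - aeval w p := by
  have hvw : (Ideal.Quotient.mkₐ R (Ideal.span {d})).comp (aeval v) =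
      (Ideal.Quotient.mkₐ R (Ideal.span {d})).comp (aeval w) :=
    algHom_ext fun i => by
      simpa [Ideal.Quotient.mk_eq_mk_iff_sub_mem, Ideal.mem_span_singleton] using h i
  exact Ideal.mem_span_singleton.1 <|
    (Ideal.Quotient.mk_eq_mk_iff_sub_mem _ _).1 (DFunLike.congr_fun hvw p)

lemma pderiv_aeval_eq_sum [Fintype σ] (v : σ → MvPolynomial τ R) (i : τ) (p : MvPolynomial σ R) :
    pderiv i (aeval v p) = ∑ j, aeval v (pderiv j p) * pderiv i (v j) := by
  classical
  induction p using MvPolynomial.induction_on with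
  | C a => simp
  | add p q hp hq => simp only [map_add, hp, hq, add_mul, Finset.sum_add_distrib]
  | mul_X p j hp =>
    simp only [map_mul, aeval_X, pderiv_mul, hp, map_add, add_mul, Finset.sum_add_distrib,
      Finset.sum_mul, pderiv_X, Pi.single_apply]
    congr 1
    · exact Finset.sum_congr rfl fun _ _ => by ring
    · simp [apply_ite, ite_mul]

/-- The Jacobian determinant of the pair `(p, q)` with respect to the variables `i` and `j`. -/
def jacobian (i j : σ) (p q : MvPolynomial σ R) : MvPolynomial σ R :=
  pderiv i p * pderiv j q - pderiv j p * pderiv i q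

lemma jacobian_swap (i j : σ) (p q : MvPolynomial σ R) :
    jacobian i j q p = -jacobian i j p q := by
  simp only [jacobian]
  ring

lemma jacobian_aeval {i j : τ} {v : Fin 3 → MvPolynomial τ R} (hi : pderiv i (v 0) = 0)
    (hj : pderiv j (v 0) = 0) (p q : MvPolynomial (Fin 3) R) :
    jacobian i j (aeval v p) (aeval v q) =
      aeval v (jacobian 1 2 p q) * jacobian i j (v 1) (v 2) := by
  simp only [jacobian, pderiv_aeval_eq_sum, Fin.sum_univ_three, hi, hj, map_sub, map_mul]
  ring

end PolynomialMaps

section NonarchimedeanBounds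

lemma apply_aeval_le_pow_totalDegree {R S σ : Type*} [CommRing R] [CommRing S] [Nontrivial S]
    [Algebra R S] {v : AbsoluteValue S ℝ} (hv : IsNonarchimedean v)
    (hR : ∀ a, v (algebraMap R S a) ≤ 1) {m : ℝ} (hm : 1 ≤ m) {w : σ → S} (hw : ∀ i, v (w i) ≤ m)
    (p : MvPolynomial σ R) : v (aeval w p) ≤ m ^ p.totalDegree := by
  rw [aeval_def, eval₂_eq]
  refine Finset.sum_induction _ (v · ≤ m ^ p.totalDegree)
    (fun a b ha hb => (hv a b).trans (max_le ha hb)) (by simpa using by positivity) fun d hd => ?_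
  calc v (algebraMap R S (coeff d p) * ∏ i ∈ d.support, w i ^ d i)
      ≤ 1 * ∏ i ∈ d.support, m ^ d i := by
        rw [map_mul, map_prod]
        simp only [map_pow]
        gcongr with i
        exacts [hR _, hw i]
    _ = m ^ (d.sum fun _ e => e) := by rw [one_mul, Finset.prod_pow_eq_pow_sum, Finsupp.sum]
    _ ≤ m ^ p.totalDegree := pow_le_pow_right₀ hm (le_totalDegree hd)

open Polynomial in
lemma continuous_gaussNorm {R F : Type*} [Semiring R] [FunLike F R ℝ] (v : F) (p : R[X]) :
    Continuous (p.gaussNorm v) := by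
  by_cases hp : p.support.Nonempty
  · simp only [gaussNorm, hp, dite_true]
    fun_prop
  · simpa only [gaussNorm, hp, dite_false] using continuous_const

open Polynomial in
lemma exists_gaussNorm_eq {R : Type*} [Ring R] (v : AbsoluteValue R ℝ) {p : R[X]}
    (hp : 0 < p.natDegree) {m : ℝ} (hm : v (p.coeff 0) < m) : ∃ c > 0, p.gaussNorm v c = m := by
  have hlead : 0 < v p.leadingCoeff := v.pos (leadingCoeff_ne_zero.2 fun h => by simp [h] at hp)
  obtain ⟨b, hb, hbm⟩ : ∃ b : ℝ, 0 ≤ b ∧ m ≤ v p.leadingCoeff * b ^ p.natDegree :=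
    ((Filter.eventually_ge_atTop 0).and
      (((Filter.tendsto_pow_atTop hp.ne').const_mul_atTop hlead).eventually_ge_atTop m)).exists
  obtain ⟨c, hc, hcm⟩ := intermediate_value_Icc hb (continuous_gaussNorm v p).continuousOn
    ⟨(gaussNorm_zero_right v p).trans_le hm.le, hbm.trans (le_gaussNorm v p hb p.natDegree)⟩
  refine ⟨c, hc.1.lt_of_ne ?_, hcm⟩
  rintro rfl
  exact hm.ne ((gaussNorm_zero_right v p).symm.trans hcm)

end NonarchimedeanBounds

lemma exists_one_lt_mul_pow_le_one {a : ℝ} (ha : a < 1) (n : ℕ) : ∃ m > 1, a * m ^ n ≤ 1 := by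
  have hcont : Continuous fun m : ℝ => a * m ^ n := by fun_prop
  have hlt := (hcont.tendsto' 1 a (by simp)).eventually_lt_const ha
  obtain ⟨m, hlt, hm⟩ := ((hlt.filter_mono nhdsWithin_le_nhds).and
    (self_mem_nhdsWithin (s := Set.Ioi 1))).exists
  exact ⟨m, hm, hlt.le⟩

section Jacobian

lemma isUnit_jacobian_of_aeval_eq_X {R : Type*} [CommRing R]
    {v w : Fin 3 → MvPolynomial (Fin 3) R} (hv : v 0 = X 0)
    (hvw : ∀ i, aeval v (w i) = X i) : IsUnit (jacobian 1 2 (v 1) (v 2)) := by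
  have h := jacobian_aeval (i := 1) (j := 2) (v := v) (by simp [hv]) (by simp [hv]) (w 1) (w 2)
  refine IsUnit.of_mul_eq_one_right _ (h.symm.trans ?_)
  rw [hvw, hvw]
  simp [jacobian]

variable {k} {p q : MvPolynomial (Fin 2) k} {j : k}

lemma mul_eq_X_mul_X_of_associated (hjac : jacobian 0 1 p q = C j) (hj : j ≠ 0)
    (h : Associated (1 + X 0 * X 1) (1 + p * q)) : p * q = X 0 * X 1 := by
  obtain ⟨v, hv⟩ := h
  obtain ⟨c, -, hc⟩ := MvPolynomial.isUnit_iff_eq_C_of_isReduced.1 v.isUnit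
  rw [hc] at hv
  have h00 : 1 * c = 1 + constantCoeff p * constantCoeff q := by
    simpa using congrArg constantCoeff hv
  have hgrad : ∀ i, constantCoeff (pderiv i p) * constantCoeff q +
      constantCoeff p * constantCoeff (pderiv i q) = 0 := fun i => by
    simpa [pderiv_mul, add_comm, mul_comm] using congrArg (constantCoeff <| pderiv i ·) hv.symm
  have hj' := congrArg constantCoeff hjac
  simp only [jacobian, map_sub, map_mul, constantCoeff_C] at hj'
  have hpq : constantCoeff p * constantCoeff q = 0 := by
    refine (mul_eq_zero.1 ?_).resolve_right hj
    linear_combination (-constantCoeff p * constantCoeff q) * hj' +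
      constantCoeff p * constantCoeff (pderiv 1 q) * hgrad 0 -
      constantCoeff p * constantCoeff (pderiv 0 q) * hgrad 1
  have hc1 : c = 1 := by linear_combination h00 + hpq
  rw [hc1, C_1] at hv
  linear_combination -hv

lemma eq_one_of_X_zero_dvd (hpq : p * q = X 0 * X 1) (hjac : jacobian 0 1 p q = C j) (hj : j ≠ 0)
    (hp : X 0 ∣ p) : j = 1 := by
  obtain ⟨r, rfl⟩ := hp
  have hrq : r * q = X 1 := mul_left_cancel₀ (X_ne_zero 0) ((mul_assoc _ _ _).symm.trans hpq)
  rcases (X_prime (R := k)).irreducible.isUnit_or_isUnit hrq.symm with h | h <;>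
    obtain ⟨a, -, rfl⟩ := MvPolynomial.isUnit_iff_eq_C_of_isReduced.1 h
  · have hder : ∀ i, C a * pderiv i q = pderiv i (X 1) := fun i => by
      rw [← hrq, pderiv_C_mul]
    refine C_injective (Fin 2) k (hjac.symm.trans ?_)
    have h1 := hder 1
    simp only [pderiv_X_self] at h1
    simpa [jacobian, pderiv_mul, pderiv_X_of_ne] using h1
  · refine (hj (C_injective (Fin 2) k ?_)).elim
    simpa [jacobian] using hjac.symm

lemma eq_one_or_neg_one_of_associated (hjac : jacobian 0 1 p q = C j) (hj : j ≠ 0)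
    (h : Associated (1 + X 0 * X 1) (1 + p * q)) : j = 1 ∨ j = -1 := by
  have hpq := mul_eq_X_mul_X_of_associated hjac hj h
  rcases (X_prime (R := k)).dvd_or_dvd (Dvd.intro _ hpq.symm) with hp | hq
  · exact .inl (eq_one_of_X_zero_dvd hpq hjac hj hp)
  · have hswap : jacobian 0 1 q p = C (-j) := by rw [jacobian_swap, hjac, C_neg]
    have := eq_one_of_X_zero_dvd ((mul_comm _ _).trans hpq) hswap (neg_ne_zero.2 hj) hq
    exact .inr (neg_eq_iff_eq_neg.1 this)

end Jacobian

section Tangent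

variable {R σ : Type*} [CommRing R]

lemma mem_idealOfVars_iff_constantCoeff {p : MvPolynomial σ R} :
    p ∈ idealOfVars σ R ↔ constantCoeff p = 0 := by
  rw [← pow_one (idealOfVars σ R), mem_pow_idealOfVars_iff', constantCoeff_eq]
  simp only [Nat.lt_one_iff, Finsupp.degree_eq_zero_iff, forall_eq]

lemma X_mem_idealOfVars (i : σ) : (X i : MvPolynomial σ R) ∈ idealOfVars σ R :=
  Ideal.subset_span ⟨i, rfl⟩

lemma sub_linear_mem_idealOfVars_sq [Fintype σ] (p : MvPolynomial σ R) :
    p - C (constantCoeff p) - ∑ i, constantCoeff (pderiv i p) • X i ∈ idealOfVars σ R ^ 2 := by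
  classical
  induction p using MvPolynomial.induction_on with
  | C a => simp
  | add p q hp hq =>
    convert add_mem hp hq using 1
    simp only [map_add, add_smul, Finset.sum_add_distrib]
    ring
  | mul_X p j _ =>
    have hp : p - C (constantCoeff p) ∈ idealOfVars σ R := by
      simp [mem_idealOfVars_iff_constantCoeff]
    rw [sq]
    convert Ideal.mul_mem_mul hp (X_mem_idealOfVars j) using 1
    simp [pderiv_X, Pi.single_apply, sub_mul, apply_ite, ite_smul, smul_eq_C_mul]

/-- An automorphism of an affine space is tangent to the identity if it fixes the origin and its
differential there is the identity. -/
def IsTangentToId (φ : MvPolynomial σ R ≃ₐ[R] MvPolynomial σ R) : Prop :=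
  ∀ i, φ (X i) - X i ∈ idealOfVars σ R ^ 2

lemma IsTangentToId.symm {φ : MvPolynomial σ R ≃ₐ[R] MvPolynomial σ R} (hφ : IsTangentToId φ) :
    IsTangentToId φ.symm := by
  have hconst : constantCoeff.comp (φ : MvPolynomial σ R →+* MvPolynomial σ R) =
      constantCoeff := by
    refine ringHom_ext (fun a => congrArg constantCoeff (φ.commutes a)) fun i => ?_
    have := mem_idealOfVars_iff_constantCoeff.1 (Ideal.pow_le_self two_ne_zero (hφ i))
    exact sub_eq_zero.1 (by simpa using this)
  have hmap : (idealOfVars σ R).map φ.symm ≤ idealOfVars σ R := by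
    rw [Ideal.map_span, Ideal.span_le]
    rintro _ ⟨_, ⟨i, rfl⟩, rfl⟩
    have := DFunLike.congr_fun hconst (φ.symm (X i))
    exact mem_idealOfVars_iff_constantCoeff.2 (by simpa using this.symm)
  intro i
  have hmem := Ideal.mem_map_of_mem φ.symm (hφ i)
  rw [Ideal.map_pow, map_sub, φ.symm_apply_apply] at hmem
  rw [← neg_sub]
  exact neg_mem (Ideal.pow_right_mono hmap 2 hmem)

end Tangent

namespace SL2Ring

variable {k}

/-- The coordinate function `t` on `SL₂`. -/
def t : SL2Ring k := Ideal.Quotient.mk _ (X 0)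

/-- The coordinate function `u` on `SL₂`. -/
def u : SL2Ring k := Ideal.Quotient.mk _ (X 1)

/-- The coordinate function `x` on `SL₂`. -/
def x : SL2Ring k := Ideal.Quotient.mk _ (X 2)

/-- The coordinate function `y` on `SL₂`. -/
def y : SL2Ring k := Ideal.Quotient.mk _ (X 3)

lemma x_mul_y : (x * y : SL2Ring k) = t * u + 1 := by
  have h : Ideal.Quotient.mk (Ideal.span {sl2Rel k}) (sl2Rel k) = 0 :=
    Ideal.Quotient.eq_zero_iff_mem.2 (Ideal.mem_span_singleton_self _)
  exact sub_eq_zero.1 ((sub_sub _ _ _).symm.trans h)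

section Lift

variable {S : Type*} [CommRing S] [Algebra k S]

/-- The algebra homomorphism out of the coordinate ring of `SL₂` with prescribed values on the four
coordinate functions, i.e. an `S`-valued point of `SL₂`. -/
def lift (t' u' x' y' : S) (h : x' * y' = t' * u' + 1) : SL2Ring k →ₐ[k] S :=
  Ideal.Quotient.liftₐ _ (aeval ![t', u', x', y']) fun a ha => by
    obtain ⟨c, rfl⟩ := Ideal.mem_span_singleton.1 ha
    simp [sl2Rel, h]

variable (t' u' x' y' : S) (h : x' * y' = t' * u' + 1)

@[simp] lemma lift_t : lift (k := k) t' u' x' y' h t = t' :=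
  aeval_X (R := k) ![t', u', x', y'] 0

@[simp] lemma lift_u : lift (k := k) t' u' x' y' h u = u' :=
  aeval_X (R := k) ![t', u', x', y'] 1

@[simp] lemma lift_x : lift (k := k) t' u' x' y' h x = x' :=
  aeval_X (R := k) ![t', u', x', y'] 2

@[simp] lemma lift_y : lift (k := k) t' u' x' y' h y = y' :=
  aeval_X (R := k) ![t', u', x', y'] 3

lemma algHom_ext {f g : SL2Ring k →ₐ[k] S} (ht : f t = g t) (hu : f u = g u) (hx : f x = g x)
    (hy : f y = g y) : f = g := by
  refine Ideal.Quotient.algHom_ext _ (MvPolynomial.algHom_ext fun i => ?_)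
  fin_cases i
  exacts [ht, hu, hx, hy]

end Lift

lemma rho1Star_t : rho1Star k t = X 1 := aeval_X (R := k) ![X 1, X 0, 1, 1 + X 0 * X 1] 0

lemma rho1Star_u : rho1Star k u = X 0 := aeval_X (R := k) ![X 1, X 0, 1, 1 + X 0 * X 1] 1

lemma rho1Star_x : rho1Star k x = 1 := aeval_X (R := k) ![X 1, X 0, 1, 1 + X 0 * X 1] 2

lemma rho1Star_y : rho1Star k y = 1 + X 0 * X 1 :=
  aeval_X (R := k) ![X 1, X 0, 1, 1 + X 0 * X 1] 3

lemma irreducible_sl2Rel : Irreducible (sl2Rel k) := by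
  have hrel : sl2Rel k = X 2 * X 3 + -(X 0 * X 1 + 1) := by simp only [sl2Rel]; ring
  rw [hrel]
  refine irreducible_mul_X_add _ _ 3 (X_ne_zero _) (by simp) (fun h => ?_) ?_
  · rw [vars_neg] at h
    have := vars_add_subset _ _ h
    have h2 : (3 : Fin 4) ∈ (X 0 * X 1 : MvPolynomial (Fin 4) k).vars := by simpa using this
    simpa using vars_mul _ _ h2
  · refine (X_prime (R := k)).irreducible.isRelPrime_iff_not_dvd.2 fun h => ?_
    simpa using map_dvd (eval (0 : Fin 4 → k)) h

instance : IsDomain (SL2Ring k) :=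
  (Ideal.Quotient.isDomain_iff_prime _).2 <|
    (Ideal.span_singleton_prime irreducible_sl2Rel.ne_zero).2 irreducible_sl2Rel.prime

lemma x_ne_zero : (x : SL2Ring k) ≠ 0 := fun h => by
  simpa [h] using rho1Star_x (k := k)

lemma t_ne_zero : (t : SL2Ring k) ≠ 0 := fun h =>
  X_ne_zero (R := k) (1 : Fin 2) (by rw [← rho1Star_t, h, map_zero])

lemma u_ne_zero : (u : SL2Ring k) ≠ 0 := fun h =>
  X_ne_zero (R := k) (0 : Fin 2) (by rw [← rho1Star_u, h, map_zero])

lemma algHom_ext_of_x_ne_zero {S : Type*} [CommRing S] [IsDomain S] [Algebra k S]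
    {f g : SL2Ring k →ₐ[k] S} (hx0 : f x ≠ 0) (ht : f t = g t) (hu : f u = g u) (hx : f x = g x) :
    f = g := by
  refine algHom_ext ht hu hx (mul_left_cancel₀ hx0 ?_)
  rw [← map_mul, hx, ← map_mul, x_mul_y]
  simp only [map_add, map_mul, map_one, ht, hu]

/-- The map `k[x, u, t] → R`, with the variables in this order. -/
def incl : MvPolynomial (Fin 3) k →ₐ[k] SL2Ring k := aeval ![x, u, t]

@[simp] lemma incl_X_zero : incl (X 0 : MvPolynomial (Fin 3) k) = x := aeval_X ..

@[simp] lemma incl_X_one : incl (X 1 : MvPolynomial (Fin 3) k) = u := aeval_X ..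

@[simp] lemma incl_X_two : incl (X 2 : MvPolynomial (Fin 3) k) = t := aeval_X ..

lemma exists_x_pow_mul_eq_incl (r : SL2Ring k) : ∃ n p, x ^ n * r = incl p := by
  obtain ⟨q, rfl⟩ := Ideal.Quotient.mk_surjective r
  induction q using MvPolynomial.induction_on with
  | C a => exact ⟨0, C a, by rw [pow_zero, one_mul]; exact (incl.commutes a).symm⟩
  | add p q hp hq =>
    obtain ⟨n, p', hp⟩ := hp
    obtain ⟨m, q', hq⟩ := hq
    refine ⟨n + m, X 0 ^ m * p' + X 0 ^ n * q', ?_⟩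
    simp only [map_add, map_mul, map_pow, incl_X_zero, ← hp, ← hq]
    ring
  | mul_X p j hp =>
    obtain ⟨n, p', hp⟩ := hp
    obtain ⟨q, hq⟩ : ∃ q, x * Ideal.Quotient.mk (Ideal.span {sl2Rel k}) (X j) = incl q := by
      fin_cases j
      · exact ⟨X 0 * X 2, by rw [map_mul, incl_X_zero, incl_X_two]; rfl⟩
      · exact ⟨X 0 * X 1, by rw [map_mul, incl_X_zero, incl_X_one]; rfl⟩
      · exact ⟨X 0 * X 0, by rw [map_mul, incl_X_zero]; rfl⟩
      · exact ⟨X 2 * X 1 + 1, by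
          rw [map_add, map_mul, incl_X_one, incl_X_two, map_one, ← x_mul_y]; rfl⟩
    refine ⟨n + 1, p' * q, ?_⟩
    rw [map_mul, map_mul, ← hp, ← hq]
    ring

variable (k) in
/-- The field `k(u, t)`. -/
abbrev CoeffField : Type _ := FractionRing (MvPolynomial (Fin 2) k)

/-- The inclusion of `k[x, u, t]` into `k(u, t)[x]`. -/
def toPolynomial : MvPolynomial (Fin 3) k →ₐ[k] Polynomial (CoeffField k) :=
  (Polynomial.mapAlgHom (IsScalarTower.toAlgHom k (MvPolynomial (Fin 2) k) (CoeffField k))).comp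
    (finSuccEquiv k 2).toAlgHom

lemma toPolynomial_X_zero : toPolynomial (X 0 : MvPolynomial (Fin 3) k) = Polynomial.X := by
  simp [toPolynomial, finSuccEquiv_X_zero]

lemma toPolynomial_rename_succ (q : MvPolynomial (Fin 2) k) :
    toPolynomial (rename Fin.succ q) = Polynomial.C (algebraMap _ _ q) := by
  have h : (finSuccEquiv k 2).toAlgHom.comp (rename Fin.succ) =
      IsScalarTower.toAlgHom k (MvPolynomial (Fin 2) k) _ := MvPolynomial.algHom_ext fun i => by
    simp [finSuccEquiv_X_succ]
  rw [← Polynomial.map_C]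
  exact congrArg (Polynomial.map _) (DFunLike.congr_fun h q)

lemma toPolynomial_injective : Function.Injective (toPolynomial (k := k)) :=
  (Polynomial.map_injective _ (IsFractionRing.injective _ _)).comp (finSuccEquiv k 2).injective

/-- The embedding of the coordinate ring of `SL₂` into its fraction field `k(u, t)(x)`. -/
def toRatFunc : SL2Ring k →ₐ[k] RatFunc (CoeffField k) :=
  let ι : MvPolynomial (Fin 3) k →ₐ[k] RatFunc (CoeffField k) :=
    (IsScalarTower.toAlgHom k (Polynomial (CoeffField k)) _).comp toPolynomial
  lift (ι (X 2)) (ι (X 1)) RatFunc.X ((ι (X 2) * ι (X 1) + 1) / RatFunc.X)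
    (mul_div_cancel₀ _ RatFunc.X_ne_zero)

lemma toRatFunc_incl (p : MvPolynomial (Fin 3) k) :
    toRatFunc (incl p) = algebraMap _ (RatFunc (CoeffField k)) (toPolynomial p) := by
  have h : toRatFunc.comp incl =
      (IsScalarTower.toAlgHom k _ (RatFunc (CoeffField k))).comp toPolynomial := by
    refine MvPolynomial.algHom_ext fun i => ?_
    fin_cases i <;> simp [toRatFunc, toPolynomial_X_zero]
  exact DFunLike.congr_fun h p

lemma incl_injective : Function.Injective (incl (k := k)) := by
  refine Function.Injective.of_comp (f := toRatFunc) fun p q h => toPolynomial_injective ?_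
  simpa only [Function.comp_apply, toRatFunc_incl, (RatFunc.algebraMap_injective _).eq_iff] using h

lemma toRatFunc_injective : Function.Injective (toRatFunc (k := k)) := by
  refine (injective_iff_map_eq_zero _).2 fun r hr => ?_
  obtain ⟨n, p, hp⟩ := exists_x_pow_mul_eq_incl r
  have hp0 : p = 0 := by
    refine toPolynomial_injective (RatFunc.algebraMap_injective _ ?_)
    rw [← toRatFunc_incl, ← hp, map_mul, hr, mul_zero, map_zero, map_zero]
  rw [hp0, map_zero] at hp
  exact (mul_eq_zero.1 hp).resolve_left (pow_ne_zero n x_ne_zero)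

/-- The `x`-adic absolute value on the coordinate ring of `SL₂`, i.e. the one of the discrete
valuation ring `k(u, t)[x]` localised at `x`. -/
def xAdicAbv : AbsoluteValue (SL2Ring k) ℝ :=
  ((Polynomial.idealX (CoeffField k)).adicAbv one_lt_two).comp
    (f := (toRatFunc (k := k)).toRingHom) toRatFunc_injective

lemma xAdicAbv_apply (r : SL2Ring k) :
    xAdicAbv r = (Polynomial.idealX (CoeffField k)).adicAbv one_lt_two (toRatFunc r) :=
  rfl

lemma isNonarchimedean_xAdicAbv : IsNonarchimedean (xAdicAbv (k := k)) := fun r s => by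
  simp only [xAdicAbv_apply, map_add]
  exact (Polynomial.idealX (CoeffField k)).isNonarchimedean_adicAbv one_lt_two _ _

lemma xAdicAbv_incl (p : MvPolynomial (Fin 3) k) :
    xAdicAbv (incl p) = (Polynomial.idealX (CoeffField k)).adicAbv one_lt_two
      (algebraMap _ (RatFunc (CoeffField k)) (toPolynomial p)) := by
  rw [xAdicAbv_apply, toRatFunc_incl]

lemma xAdicAbv_incl_le_one (p : MvPolynomial (Fin 3) k) : xAdicAbv (incl p) ≤ 1 :=
  (xAdicAbv_incl p).trans_le ((Polynomial.idealX _).adicAbv_coe_le_one one_lt_two _)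

lemma xAdicAbv_algebraMap_le_one (a : k) : xAdicAbv (algebraMap k (SL2Ring k) a) ≤ 1 := by
  rw [← incl.commutes a]
  exact xAdicAbv_incl_le_one _

lemma xAdicAbv_x_lt_one : xAdicAbv (x : SL2Ring k) < 1 := by
  rw [← incl_X_zero, xAdicAbv_incl, toPolynomial_X_zero,
    IsDedekindDomain.HeightOneSpectrum.adicAbv_coe_lt_one_iff, Polynomial.idealX_span]
  exact Ideal.mem_span_singleton_self _

lemma xAdicAbv_incl_rename_succ {q : MvPolynomial (Fin 2) k} (hq : q ≠ 0) :
    xAdicAbv (incl (rename Fin.succ q)) = 1 := by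
  rw [xAdicAbv_incl, toPolynomial_rename_succ,
    IsDedekindDomain.HeightOneSpectrum.adicAbv_coe_eq_one_iff, Polynomial.idealX_span,
    Ideal.mem_span_singleton, Polynomial.X_dvd_iff, Polynomial.coeff_C_zero]
  simpa using hq

lemma xAdicAbv_u : xAdicAbv (u : SL2Ring k) = 1 := by
  rw [← incl_X_one]
  simpa using xAdicAbv_incl_rename_succ (X_ne_zero (R := k) (0 : Fin 2))

lemma xAdicAbv_t : xAdicAbv (t : SL2Ring k) = 1 := by
  rw [← incl_X_two]
  simpa using xAdicAbv_incl_rename_succ (X_ne_zero (R := k) (1 : Fin 2))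

/-- Restriction of a polynomial in `x, u, t` to the plane `x = c`, on which the coordinates `u, t`
become the variables `s, t` of `k[s, t]`. -/
def restrict (c : k) : MvPolynomial (Fin 3) k →ₐ[k] MvPolynomial (Fin 2) k :=
  aeval ![C c, X 0, X 1]

lemma X_sub_C_dvd_sub_rename_restrict (c : k) (p : MvPolynomial (Fin 3) k) :
    X 0 - C c ∣ p - rename Fin.succ (restrict c p) := by
  have h : (rename Fin.succ).comp (restrict c) = aeval ![C c, X 1, X 2] :=
    MvPolynomial.algHom_ext fun i => by fin_cases i <;> simp [restrict]
  nth_rewrite 1 [← aeval_X_left_apply p]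
  rw [← AlgHom.comp_apply, h]
  refine dvd_aeval_sub_aeval (fun i => ?_) p
  fin_cases i <;> simp

lemma X_sub_C_dvd_of_restrict_eq_zero {c : k} {p : MvPolynomial (Fin 3) k}
    (hp : restrict c p = 0) : X 0 - C c ∣ p := by
  simpa only [hp, map_zero, sub_zero] using X_sub_C_dvd_sub_rename_restrict c p

/-- Restriction of functions to the fibre `x = c` for `c ≠ 0`, a plane with coordinates `u, t`. -/
def toFibre (c : k) (hc : c ≠ 0) : SL2Ring k →ₐ[k] MvPolynomial (Fin 2) k :=
  lift (X 1) (X 0) (C c) (C c⁻¹ * (1 + X 0 * X 1)) <| by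
    rw [← mul_assoc, ← C_mul, mul_inv_cancel₀ hc, C_1]
    ring

lemma toFibre_incl {c : k} (hc : c ≠ 0) (p : MvPolynomial (Fin 3) k) :
    toFibre c hc (incl p) = restrict c p := by
  have h : (toFibre c hc).comp incl = restrict c :=
    MvPolynomial.algHom_ext fun i => by fin_cases i <;> simp [toFibre, restrict]
  exact DFunLike.congr_fun h p

lemma rho1Star_eq_toFibre : rho1Star k = toFibre 1 one_ne_zero :=
  algHom_ext (by simp [rho1Star_t, toFibre]) (by simp [rho1Star_u, toFibre])
    (by simp [rho1Star_x, toFibre]) (by simp [rho1Star_y, toFibre])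

lemma x_sub_dvd_of_toFibre_eq_zero {c : k} (hc : c ≠ 0) {r : SL2Ring k}
    (hr : toFibre c hc r = 0) : x - algebraMap k _ c ∣ r := by
  obtain ⟨n, p, hp⟩ := exists_x_pow_mul_eq_incl r
  have hdvd : x - algebraMap k _ c ∣ x ^ n * r := by
    have h0 : restrict c p = 0 := by rw [← toFibre_incl hc, ← hp, map_mul, hr, mul_zero]
    have := map_dvd incl (X_sub_C_dvd_of_restrict_eq_zero h0)
    rwa [map_sub, incl_X_zero, ← algebraMap_eq, AlgHom.commutes, ← hp] at this
  have hcop : IsCoprime (x - algebraMap k (SL2Ring k) c) x := by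
    refine ⟨-algebraMap k _ c⁻¹, algebraMap k _ c⁻¹, ?_⟩
    linear_combination (by rw [← map_mul, inv_mul_cancel₀ hc, map_one] :
      algebraMap k (SL2Ring k) c⁻¹ * algebraMap k _ c = 1)
  exact hcop.pow_right.dvd_of_dvd_mul_left hdvd

/-- Restriction of functions to the fibre `x = 0`, the product of the curve `1 + st = 0` with the
line of values of `y`, followed by restriction to `y = 0`. -/
def toCentralFibre : SL2Ring k →ₐ[k]
    MvPolynomial (Fin 2) k ⧸ Ideal.span {(1 + X 0 * X 1 : MvPolynomial (Fin 2) k)} :=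
  lift (Ideal.Quotient.mk _ (X 1)) (Ideal.Quotient.mk _ (X 0)) 0 0 <| by
    rw [← map_mul, ← map_one (Ideal.Quotient.mk _), ← map_add, zero_mul, eq_comm,
      Ideal.Quotient.eq_zero_iff_mem, Ideal.mem_span_singleton, add_comm, mul_comm]

lemma toCentralFibre_incl (p : MvPolynomial (Fin 3) k) :
    toCentralFibre (incl p) = Ideal.Quotient.mk _ (restrict 0 p) := by
  have h : toCentralFibre.comp incl = (Ideal.Quotient.mkₐ k _).comp (restrict 0) :=
    MvPolynomial.algHom_ext fun i => by fin_cases i <;> simp [toCentralFibre, restrict]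
  exact DFunLike.congr_fun h p

lemma one_add_dvd_restrict_zero {p : MvPolynomial (Fin 3) k} (hp : x ∣ incl p) :
    1 + X 0 * X 1 ∣ restrict 0 p := by
  obtain ⟨r, hr⟩ := hp
  rw [← Ideal.mem_span_singleton, ← Ideal.Quotient.eq_zero_iff_mem, ← toCentralFibre_incl, hr,
    map_mul, toCentralFibre, lift_x, zero_mul]

lemma not_isUnit_x : ¬IsUnit (x : SL2Ring k) := fun h => by
  have hdvd := one_add_dvd_restrict_zero (p := (1 : MvPolynomial (Fin 3) k)) (by simpa using h.dvd)
  simpa using map_dvd (eval ![1, -1]) hdvd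

lemma exists_algebraMap_eq_of_isUnit {r : SL2Ring k} (hr : IsUnit r) :
    ∃ c ≠ 0, algebraMap k _ c = r := by
  obtain ⟨s, hrs⟩ := hr.exists_right_inv
  obtain ⟨n, p, hp⟩ := exists_x_pow_mul_eq_incl r
  obtain ⟨m, q, hq⟩ := exists_x_pow_mul_eq_incl s
  have hpq : p * q = X 0 ^ (n + m) := by
    refine incl_injective ?_
    rw [map_mul, ← hp, ← hq, map_pow, incl_X_zero]
    linear_combination x ^ (n + m) * hrs
  obtain ⟨i, -, hpi⟩ := (dvd_prime_pow (X_prime (R := k)) _).1 (Dvd.intro _ hpq)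
  obtain ⟨v, hv⟩ := hpi.symm
  obtain ⟨c, hc, hvc⟩ := MvPolynomial.isUnit_iff_eq_C_of_isReduced.1 v.isUnit
  have hcr : IsUnit (algebraMap k (SL2Ring k) c) := hc.map _
  have hxr : x ^ n * r = x ^ i * algebraMap k _ c := by
    rw [hp, ← hv, hvc, map_mul, map_pow, incl_X_zero, ← algebraMap_eq, AlgHom.commutes]
  have hni : n = i := by
    refine le_antisymm ?_ ?_ <;> rw [← pow_dvd_pow_iff (x_ne_zero (k := k)) not_isUnit_x]
    · exact hcr.dvd_mul_right.1 (Dvd.intro _ hxr)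
    · exact hr.dvd_mul_right.1 (Dvd.intro _ hxr.symm)
  subst hni
  exact ⟨c, hc.ne_zero, (mul_left_cancel₀ (pow_ne_zero n x_ne_zero) hxr).symm⟩

/-- Cancelling as many factors `x` as possible leaves a numerator whose restriction to `x = 0` is
nonzero; it vanishes on the image `1 + st = 0` of the fibre `x = 0`. -/
lemma exists_x_pow_mul_eq_of_notMem_range {r : SL2Ring k} (hr : r ∉ Set.range incl) :
    ∃ n q g, q ≠ 0 ∧ x ^ n * r = incl (rename Fin.succ ((1 + X 0 * X 1) * q) + X 0 * g) := by
  classical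
  have hex := exists_x_pow_mul_eq_incl r
  obtain ⟨f, hf⟩ := Nat.find_spec hex
  obtain ⟨n, hn⟩ : ∃ n, Nat.find hex = n + 1 := by
    refine Nat.exists_eq_succ_of_ne_zero fun h0 => hr ⟨f, ?_⟩
    rw [← hf, h0, pow_zero, one_mul]
  rw [hn] at hf
  have hf0 : restrict 0 f ≠ 0 := fun h0 => by
    obtain ⟨f', rfl⟩ := X_sub_C_dvd_of_restrict_eq_zero h0
    refine Nat.find_min hex (hn.symm ▸ n.lt_succ_self : n < _) ⟨f', mul_left_cancel₀ x_ne_zero ?_⟩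
    rw [← mul_assoc, ← pow_succ', hf, map_mul, map_zero, sub_zero, incl_X_zero]
  obtain ⟨q, hq⟩ := one_add_dvd_restrict_zero (p := f) (hf ▸ ⟨x ^ n * r, by ring⟩)
  obtain ⟨g, hg⟩ := X_sub_C_dvd_sub_rename_restrict 0 f
  refine ⟨n + 1, q, g, right_ne_zero_of_mul (hq ▸ hf0), ?_⟩
  rw [hf, ← hq]
  congr 1
  linear_combination hg - g * (map_zero C : (C 0 : MvPolynomial (Fin 3) k) = 0)

section Deformation

/-- Since `f = (1 + ut) q + x g` and `x g` stay bounded by `1`, so does `(1 + ut) q`, while `q` does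
not shrink. -/
lemma apply_X_mul_X_le_one {S : Type*} [CommRing S] [IsDomain S] [Algebra k S]
    {N : AbsoluteValue S ℝ} (hN : IsNonarchimedean N) (hk : ∀ a, N (algebraMap k S a) ≤ 1)
    (α : MvPolynomial (Fin 3) k →ₐ[k] S) {q : MvPolynomial (Fin 2) k} {g : MvPolynomial (Fin 3) k}
    {m : ℝ} (hm : 1 ≤ m) (hα : ∀ i, N (α (X i)) ≤ m) (hg : N (α (X 0)) * m ^ g.totalDegree ≤ 1)
    (hf : N (α (rename Fin.succ ((1 + X 0 * X 1) * q) + X 0 * g)) ≤ 1)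
    (hq : 1 ≤ N (α (rename Fin.succ q))) : N (α (X 1) * α (X 2)) ≤ 1 := by
  have hsub : ∀ {a b}, N a ≤ 1 → N b ≤ 1 → N (a - b) ≤ 1 := fun {a b} ha hb => by
    rw [sub_eq_add_neg]
    exact (hN _ _).trans (max_le ha (by rwa [N.map_neg]))
  have hxg : N (α (X 0 * g)) ≤ 1 := by
    have hαg : N (α g) ≤ m ^ g.totalDegree := by
      rw [aeval_unique α]
      exact apply_aeval_le_pow_totalDegree hN hk hm hα g
    rw [map_mul, map_mul]
    exact (mul_le_mul_of_nonneg_left hαg (N.nonneg _)).trans hg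
  have hprod : N (1 + α (X 1) * α (X 2)) * N (α (rename Fin.succ q)) ≤ 1 := by
    have := hsub hf hxg
    rwa [← map_sub, add_sub_cancel_right, map_mul, map_mul, map_mul, map_add, map_mul, map_one,
      rename_X, rename_X, map_add, map_mul, map_one] at this
  have hone : N (1 + α (X 1) * α (X 2)) ≤ 1 :=
    (le_mul_of_one_le_right (N.nonneg _) hq).trans hprod
  simpa using hsub hone N.map_one.le

variable {δ : SL2Ring k →ₐ[k] Polynomial (SL2Ring k)}

lemma natDegree_mul_pos_of_deformation_ne (h0 : ∀ r, (δ r).coeff 0 = r)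
    (hx : δ x = Polynomial.C x) (hδ : δ ≠ Polynomial.CAlgHom) : 0 < (δ u * δ t).natDegree := by
  have hne : ∀ {r}, r ≠ 0 → δ r ≠ 0 := fun {r} hr h =>
    hr (by rw [← h0 r, h, Polynomial.coeff_zero])
  by_contra! hdeg
  rw [Polynomial.natDegree_mul (hne u_ne_zero) (hne t_ne_zero)] at hdeg
  have hconst : ∀ r, (δ r).natDegree = 0 → δ r = Polynomial.C r := fun r hr => by
    rw [Polynomial.eq_C_of_natDegree_eq_zero hr, h0]
  exact hδ (algHom_ext_of_x_ne_zero (S := Polynomial (SL2Ring k)) (hne x_ne_zero)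
    (hconst t (by lia)) (hconst u (by lia)) hx)

lemma mem_range_incl_of_deformation_eq_C (h0 : ∀ r, (δ r).coeff 0 = r)
    (hx : δ x = Polynomial.C x) (hδ : δ ≠ Polynomial.CAlgHom) {r : SL2Ring k}
    (hr : δ r = Polynomial.C r) : r ∈ Set.range incl := by
  by_contra hmem
  obtain ⟨n, q, g, hq, hqg⟩ := exists_x_pow_mul_eq_of_notMem_range hmem
  obtain ⟨m, hm, hxm⟩ := exists_one_lt_mul_pow_le_one (xAdicAbv_x_lt_one (k := k)) g.totalDegree
  obtain ⟨c, hc, hcm⟩ := exists_gaussNorm_eq xAdicAbv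
    (natDegree_mul_pos_of_deformation_ne h0 hx hδ) (m := m) (by
      rwa [Polynomial.mul_coeff_zero, h0, h0, map_mul, xAdicAbv_u, xAdicAbv_t, one_mul])
  have := Polynomial.gaussNorm_isAbsoluteValue isNonarchimedean_xAdicAbv (R := SL2Ring k) hc
  let N := IsAbsoluteValue.toAbsoluteValue (Polynomial.gaussNorm (xAdicAbv (k := k)) c)
  have hNC : ∀ s, N (Polynomial.C s) = xAdicAbv s := Polynomial.gaussNorm_C _ _
  have hNδ : ∀ s, xAdicAbv s ≤ N (δ s) := fun s => by
    have hle := Polynomial.le_gaussNorm xAdicAbv (δ s) hc.le 0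
    rwa [h0, pow_zero, mul_one] at hle
  have hut : N (δ u) * N (δ t) = m := by rw [← map_mul]; exact hcm
  have hu : 1 ≤ N (δ u) := (xAdicAbv_u (k := k)).symm.trans_le (hNδ u)
  have ht : 1 ≤ N (δ t) := (xAdicAbv_t (k := k)).symm.trans_le (hNδ t)
  have hxN : N (δ x) = xAdicAbv (x : SL2Ring k) := by rw [hx, hNC]
  have hf : N (δ (x ^ n * r)) ≤ 1 := by
    rw [map_mul, map_pow, hx, hr, ← map_pow, ← map_mul, hNC, hqg]
    exact xAdicAbv_incl_le_one _
  have hqN : 1 ≤ N (δ (incl (rename Fin.succ q))) :=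
    (xAdicAbv_incl_rename_succ hq).symm.trans_le (hNδ _)
  have hle : N (δ.comp incl (X 1) * δ.comp incl (X 2)) ≤ 1 := by
    refine apply_X_mul_X_le_one (S := Polynomial (SL2Ring k)) (N := N) (q := q) (g := g)
      (Polynomial.isNonarchimedean_gaussNorm _ isNonarchimedean_xAdicAbv hc.le)
      (fun a => (hNC _).trans_le (xAdicAbv_algebraMap_le_one a)) (δ.comp incl) hm.le
      (fun i => ?_) ?_ ?_ hqN
    · fin_cases i
      · simpa [hxN] using xAdicAbv_x_lt_one.le.trans hm.le
      · simpa [← hut] using le_mul_of_one_le_right (N.nonneg _) ht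
      · simpa [← hut] using le_mul_of_one_le_left (N.nonneg _) hu
    · simpa [hxN] using hxm
    · rwa [AlgHom.comp_apply, ← hqg]
  rw [AlgHom.comp_apply, AlgHom.comp_apply, incl_X_one, incl_X_two, map_mul, hut] at hle
  exact hm.not_ge hle

end Deformation

/-- The coaction of the one-parameter group of shears `u ↦ u + ax`, `y ↦ y + at` of `SL₂`, with
the parameter `a` as polynomial variable. -/
def shearCoaction : SL2Ring k →ₐ[k] Polynomial (SL2Ring k) :=
  lift (Polynomial.C t) (Polynomial.C u + Polynomial.C x * Polynomial.X) (Polynomial.C x)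
    (Polynomial.C y + Polynomial.C t * Polynomial.X) <| by
      rw [mul_add, ← Polynomial.C_mul, x_mul_y, Polynomial.C_add, Polynomial.C_mul, Polynomial.C_1]
      ring

lemma coeff_zero_shearCoaction (r : SL2Ring k) : (shearCoaction r).coeff 0 = r := by
  have h : ((Polynomial.aeval (0 : SL2Ring k)).restrictScalars k).comp shearCoaction =
      AlgHom.id k _ := by
    apply algHom_ext <;> simp [shearCoaction]
  rw [Polynomial.coeff_zero_eq_aeval_zero]
  exact DFunLike.congr_fun h r

/-- The transposition of matrices. -/
def transpose : SL2Ring k ≃ₐ[k] SL2Ring k :=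
  .ofAlgHom (lift u t x y (by rw [x_mul_y, mul_comm])) (lift u t x y (by rw [x_mul_y, mul_comm]))
    (by apply algHom_ext <;> simp) (by apply algHom_ext <;> simp)

@[simp] lemma transpose_t : transpose (t : SL2Ring k) = u := by simp [transpose]

@[simp] lemma transpose_u : transpose (u : SL2Ring k) = t := by simp [transpose]

@[simp] lemma transpose_x : transpose (x : SL2Ring k) = x := by simp [transpose]

/-- The deformation conjugate to the shears by `Φ` leaves `Φ t` invariant. -/
lemma apply_t_mem_range_incl {Φ : SL2Ring k ≃ₐ[k] SL2Ring k} (hx : Φ x = x) :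
    Φ t ∈ Set.range incl := by
  let δ : SL2Ring k →ₐ[k] Polynomial (SL2Ring k) :=
    (Polynomial.mapAlgHom (Φ : SL2Ring k →ₐ[k] SL2Ring k)).comp
      (shearCoaction.comp (Φ.symm : SL2Ring k →ₐ[k] SL2Ring k))
  have hδ : ∀ r, δ (Φ r) = (shearCoaction r).map (Φ : SL2Ring k →+* SL2Ring k) := fun r =>
    congrArg (fun s => (shearCoaction s).map _) (Φ.symm_apply_apply r)
  have hδx : δ x = Polynomial.C x := by
    rw [← hx, hδ]
    simp [shearCoaction]
  refine mem_range_incl_of_deformation_eq_C (δ := δ) (fun r => ?_) hδx (fun h => ?_) ?_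
  · obtain ⟨r, rfl⟩ := Φ.surjective r
    rw [hδ, Polynomial.coeff_map, coeff_zero_shearCoaction]
    rfl
  · have h1 := congrArg (Polynomial.coeff · 1) ((hδ u).symm.trans (DFunLike.congr_fun h (Φ u)))
    simp [shearCoaction, Polynomial.coeff_C_succ, hx, x_ne_zero] at h1
  · rw [hδ]
    simp [shearCoaction]

lemma apply_u_mem_range_incl {Φ : SL2Ring k ≃ₐ[k] SL2Ring k} (hx : Φ x = x) :
    Φ u ∈ Set.range incl := by
  simpa using apply_t_mem_range_incl (Φ := transpose.trans Φ) (by simpa using hx)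

lemma not_x_dvd_t_sub (e : k) : ¬x ∣ t - algebraMap k (SL2Ring k) e := fun h => by
  have hdvd := one_add_dvd_restrict_zero (p := X 2 - C e) (by simpa [← algebraMap_eq] using h)
  have hT := map_dvd (aeval fun _ => (Polynomial.X : Polynomial k)) hdvd
  simp only [restrict, map_add, map_one, map_mul, map_sub, aeval_X, Matrix.cons_val, algHom_C,
    AlgHom.commutes, Polynomial.algebraMap_eq] at hT
  have hdeg := Polynomial.natDegree_le_of_dvd hT (Polynomial.X_sub_C_ne_zero e)
  rw [Polynomial.natDegree_X_sub_C, show (1 + .X * .X : Polynomial k).natDegree = 2 by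
    compute_degree!] at hdeg
  exact absurd hdeg (by decide)

/-- On the fibre `x = d` the coordinate function `Φ t` would be invertible, hence constant, but no
`t - e` vanishes on the fibre `x = 0`. -/
lemma not_associated_apply_x (Φ : SL2Ring k ≃ₐ[k] SL2Ring k) {d : k} (hd : d ≠ 0) :
    ¬Associated (Φ x) (x - algebraMap k _ d) := fun h => by
  have hx : toFibre d hd (Φ x) = 0 := by
    have h0 : toFibre d hd (x - algebraMap k _ d) = 0 := by simp [toFibre, ← algebraMap_eq]
    exact zero_dvd_iff.1 (h0 ▸ map_dvd _ h.symm.dvd)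
  have hunit : toFibre d hd (Φ t) * -toFibre d hd (Φ u) = 1 := by
    have := congrArg (fun r => toFibre d hd (Φ r)) (x_mul_y (k := k))
    simp only [map_mul, map_add, map_one, hx] at this
    linear_combination this
  obtain ⟨e, -, he⟩ := MvPolynomial.isUnit_iff_eq_C_of_isReduced.1 (IsUnit.of_mul_eq_one _ hunit)
  have hdvd : x - algebraMap k _ d ∣ Φ (t - algebraMap k _ e) :=
    x_sub_dvd_of_toFibre_eq_zero hd (by simp [he, ← algebraMap_eq])
  exact not_x_dvd_t_sub e ((map_dvd_iff Φ).1 (h.dvd.trans hdvd))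

lemma x_sub_one_dvd_iff {r : SL2Ring k} : x - 1 ∣ r ↔ rho1Star k r = 0 := by
  refine ⟨fun h => zero_dvd_iff.1 ?_, fun h => ?_⟩
  · simpa [rho1Star_x] using map_dvd (rho1Star k) h
  · rw [← map_one (algebraMap k (SL2Ring k))]
    exact x_sub_dvd_of_toFibre_eq_zero one_ne_zero (rho1Star_eq_toFibre (k := k) ▸ h)

lemma apply_x_eq_of_extends {φ : MvPolynomial (Fin 2) k ≃ₐ[k] MvPolynomial (Fin 2) k}
    {Φ : SL2Ring k ≃ₐ[k] SL2Ring k} (h : ∀ r, φ (rho1Star k r) = rho1Star k (Φ r)) : Φ x = x := by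
  have hdvd : ∀ r, x - 1 ∣ Φ r ↔ x - 1 ∣ r := fun r => by
    rw [x_sub_one_dvd_iff, ← h, EmbeddingLike.map_eq_zero_iff, x_sub_one_dvd_iff]
  have hassoc : Associated (x - 1) (Φ (x - 1)) := by
    refine associated_of_dvd_dvd ((hdvd _).2 dvd_rfl) ((map_dvd_iff Φ.symm).1 ?_)
    rw [Φ.symm_apply_apply, ← hdvd, Φ.apply_symm_apply]
  obtain ⟨v, hv⟩ := hassoc
  obtain ⟨c, hc, hcv⟩ := exists_algebraMap_eq_of_isUnit v.isUnit
  rw [← hcv, map_sub, map_one] at hv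
  by_cases hc1 : c = 1
  · rw [hc1, map_one] at hv
    linear_combination -hv
  · have hd : 1 - c⁻¹ ≠ 0 := sub_ne_zero.2 fun h => hc1 (by rw [← inv_inv c, ← h, inv_one])
    refine (not_associated_apply_x Φ hd (Associated.symm ⟨v, ?_⟩)).elim
    have hcc : algebraMap k (SL2Ring k) c⁻¹ * algebraMap k _ c = 1 := by
      rw [← map_mul, inv_mul_cancel₀ hc, map_one]
    rw [← hcv, map_sub, map_one]
    linear_combination hv + hcc

lemma jacobian_restrict (c : k) (p q : MvPolynomial (Fin 3) k) :
    jacobian 0 1 (restrict c p) (restrict c q) = restrict c (jacobian 1 2 p q) := by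
  rw [restrict, jacobian_aeval (by simp) (by simp)]
  simp [jacobian]

lemma restrict_aeval {v : Fin 3 → MvPolynomial (Fin 3) k} (hv : v 0 = X 0) (c : k)
    (p : MvPolynomial (Fin 3) k) : restrict c (aeval v p) =
      aeval ![restrict c (v 1), restrict c (v 2)] (restrict c p) := by
  have h : (restrict c).comp (aeval v) =
      (aeval ![restrict c (v 1), restrict c (v 2)]).comp (restrict c) :=
    MvPolynomial.algHom_ext fun i => by fin_cases i <;> simp [restrict, hv]
  exact DFunLike.congr_fun h p

variable {Φ : SL2Ring k ≃ₐ[k] SL2Ring k}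

lemma exists_incl_aeval_eq (hx : Φ x = x) : ∃ v : Fin 3 → MvPolynomial (Fin 3) k,
    v 0 = X 0 ∧ ∀ p, incl (aeval v p) = Φ (incl p) := by
  obtain ⟨F, hF⟩ := apply_u_mem_range_incl hx
  obtain ⟨G, hG⟩ := apply_t_mem_range_incl hx
  have h : incl.comp (aeval ![X 0, F, G]) = (Φ : SL2Ring k →ₐ[k] SL2Ring k).comp incl :=
    MvPolynomial.algHom_ext fun i => by fin_cases i <;> simp [hx, hF, hG]
  exact ⟨![X 0, F, G], rfl, fun p => DFunLike.congr_fun h p⟩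

lemma one_add_dvd_of_incl_aeval_eq (hx : Φ x = x) {v : Fin 3 → MvPolynomial (Fin 3) k}
    (hv : ∀ p, incl (aeval v p) = Φ (incl p)) :
    1 + X 0 * X 1 ∣ restrict 0 (aeval v (1 + X 1 * X 2 : MvPolynomial (Fin 3) k)) := by
  refine one_add_dvd_restrict_zero ⟨Φ y, ?_⟩
  rw [hv, map_add, map_mul, incl_X_one, incl_X_two, map_one, mul_comm u, add_comm, ← x_mul_y,
    map_mul, hx]

/-- The curve `1 + st = 0` is the image in the plane `x = 0` of a fibre of `x`. -/
lemma associated_of_incl_aeval_eq (hx : Φ x = x) {v w : Fin 3 → MvPolynomial (Fin 3) k}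
    (hv0 : v 0 = X 0) (hv : ∀ p, incl (aeval v p) = Φ (incl p))
    (hw : ∀ p, incl (aeval w p) = Φ.symm (incl p)) :
    Associated (1 + X 0 * X 1) (1 + restrict 0 (v 1) * restrict 0 (v 2)) := by
  have hvw : aeval v (aeval w (1 + X 1 * X 2)) = (1 + X 1 * X 2 : MvPolynomial (Fin 3) k) :=
    incl_injective <| by rw [hv, hw, Φ.apply_symm_apply]
  have hv_dvd := one_add_dvd_of_incl_aeval_eq hx hv
  have hw_dvd := map_dvd (aeval ![restrict 0 (v 1), restrict 0 (v 2)]) <|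
    one_add_dvd_of_incl_aeval_eq (Φ.symm_apply_eq.2 hx.symm) hw
  rw [← restrict_aeval hv0, hvw] at hw_dvd
  simp only [restrict, map_add, map_mul, map_one, aeval_X, Matrix.cons_val] at hv_dvd hw_dvd
  exact associated_of_dvd_dvd hv_dvd hw_dvd

/-- The planes `x = 1` and `x = 0` see the same constant Jacobian of `Φ` relative to `x`. -/
lemma exists_jacobian_eq_and_associated (hx : Φ x = x) :
    ∃ j ≠ (0 : k), ∃ p q : MvPolynomial (Fin 2) k,
      jacobian 0 1 (rho1Star k (Φ u)) (rho1Star k (Φ t)) = C j ∧ jacobian 0 1 p q = C j ∧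
        Associated (1 + X 0 * X 1) (1 + p * q) := by
  obtain ⟨v, hv0, hv⟩ := exists_incl_aeval_eq hx
  obtain ⟨w, -, hw⟩ := exists_incl_aeval_eq (Φ.symm_apply_eq.2 hx.symm)
  have hvw : ∀ i, aeval v (w i) = X i := fun i => incl_injective <| by
    rw [hv, ← aeval_X (R := k) w i, hw, Φ.apply_symm_apply]
  obtain ⟨j, hj, hvj⟩ := MvPolynomial.isUnit_iff_eq_C_of_isReduced.1
    (isUnit_jacobian_of_aeval_eq_X hv0 hvw)
  have hjac : ∀ c, jacobian 0 1 (restrict c (v 1)) (restrict c (v 2)) = C j := fun c => by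
    rw [jacobian_restrict, hvj, algHom_C, algebraMap_eq]
  have hrho : ∀ i, rho1Star k (Φ (incl (X i))) = restrict 1 (v i) := fun i => by
    rw [← hv, aeval_X, rho1Star_eq_toFibre, toFibre_incl]
  refine ⟨j, hj.ne_zero, _, _, ?_, hjac 0, associated_of_incl_aeval_eq hx hv0 hv hw⟩
  rw [← incl_X_one, ← incl_X_two, hrho, hrho, hjac]

lemma jacobian_eq_one_or_neg_one_of_extends
    {φ : MvPolynomial (Fin 2) k ≃ₐ[k] MvPolynomial (Fin 2) k}
    (h : ∀ r, φ (rho1Star k r) = rho1Star k (Φ r)) :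
    jacobian 0 1 (φ (X 0)) (φ (X 1)) = 1 ∨ jacobian 0 1 (φ (X 0)) (φ (X 1)) = -1 := by
  obtain ⟨j, hj, p, q, hjac, hpq, hassoc⟩ :=
    exists_jacobian_eq_and_associated (apply_x_eq_of_extends h)
  rw [← rho1Star_u, ← rho1Star_t, h, h, hjac]
  refine (eq_one_or_neg_one_of_associated hpq hj hassoc).imp (fun hj1 => ?_) fun hj1 => ?_
  · rw [hj1, C_1]
  · rw [hj1, C_neg, C_1]

variable (k) in
/-- The group of the automorphisms of the plane that extend to `SL₂` via `ρ₁`. -/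
def extendable : Subgroup (MvPolynomial (Fin 2) k ≃ₐ[k] MvPolynomial (Fin 2) k) where
  carrier := {φ | ∃ Φ : SL2Ring k ≃ₐ[k] SL2Ring k,
    φ.toAlgHom.comp (rho1Star k) = (rho1Star k).comp Φ.toAlgHom}
  one_mem' := ⟨1, rfl⟩
  mul_mem' := by
    rintro φ ψ ⟨Φ, hΦ⟩ ⟨Ψ, hΨ⟩
    refine ⟨Φ * Ψ, AlgHom.ext fun r => ?_⟩
    exact (congrArg φ (DFunLike.congr_fun hΨ r)).trans (DFunLike.congr_fun hΦ (Ψ r))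
  inv_mem' := by
    rintro φ ⟨Φ, hΦ⟩
    refine ⟨Φ⁻¹, AlgHom.ext fun r => φ.symm_apply_eq.2 ?_⟩
    exact (congrArg _ (Φ.apply_symm_apply r).symm).trans (DFunLike.congr_fun hΦ (Φ.symm r)).symm

/-- The endomorphism of the plane `x = 1` induced by an endomorphism of `SL₂` over the `x`-line. -/
def restrictPlane (Φ : SL2Ring k →ₐ[k] SL2Ring k) :
    MvPolynomial (Fin 2) k →ₐ[k] MvPolynomial (Fin 2) k :=
  aeval ![rho1Star k (Φ u), rho1Star k (Φ t)]

lemma restrictPlane_rho1Star {Φ : SL2Ring k →ₐ[k] SL2Ring k} (hx : Φ x = x) (r : SL2Ring k) :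
    restrictPlane Φ (rho1Star k r) = rho1Star k (Φ r) := by
  have h : (restrictPlane Φ).comp (rho1Star k) = (rho1Star k).comp Φ :=
    algHom_ext_of_x_ne_zero (by simp [rho1Star_x]) (by simp [restrictPlane, rho1Star_t])
      (by simp [restrictPlane, rho1Star_u]) (by simp [hx, rho1Star_x])
  exact DFunLike.congr_fun h r

lemma exists_mem_extendable {Φ : SL2Ring k ≃ₐ[k] SL2Ring k} (hx : Φ x = x) :
    ∃ φ ∈ extendable k, ∀ r, φ (rho1Star k r) = rho1Star k (Φ r) := by
  have hid : ∀ Ψ : SL2Ring k ≃ₐ[k] SL2Ring k, Ψ x = x →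
      (restrictPlane (Ψ : SL2Ring k →ₐ[k] SL2Ring k)).comp
        (restrictPlane (Ψ.symm : SL2Ring k →ₐ[k] SL2Ring k)) = AlgHom.id k _ := fun Ψ hΨ => by
    have hΨ' : (Ψ : SL2Ring k →ₐ[k] SL2Ring k) x = x := hΨ
    refine MvPolynomial.algHom_ext fun i => ?_
    rw [AlgHom.comp_apply]
    conv_lhs => enter [2]; rw [restrictPlane, aeval_X]
    fin_cases i <;> simp [restrictPlane_rho1Star hΨ', rho1Star_t, rho1Star_u]
  refine ⟨.ofAlgHom _ _ (hid Φ hx) (hid Φ.symm (Φ.symm_apply_eq.2 hx.symm)),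
    ⟨Φ, AlgHom.ext fun r => ?_⟩, fun r => ?_⟩ <;>
    exact restrictPlane_rho1Star (Φ := (Φ : SL2Ring k →ₐ[k] SL2Ring k)) hx r

/-- The comorphism of the map `(s, t) = (xu, xt)` from `SL₂` to the plane, by which an automorphism
of the plane is conjugated with the scaling by `x`. -/
def scale : MvPolynomial (Fin 2) k →ₐ[k] SL2Ring k := aeval ![x * u, x * t]

lemma rho1Star_scale (p : MvPolynomial (Fin 2) k) : rho1Star k (scale p) = p := by
  have h : (rho1Star k).comp scale = AlgHom.id k _ := MvPolynomial.algHom_ext fun i => by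
    fin_cases i <;> simp [scale, rho1Star_x, rho1Star_u, rho1Star_t]
  exact DFunLike.congr_fun h p

lemma x_sq_dvd_scale {p : MvPolynomial (Fin 2) k} (hp : p ∈ idealOfVars (Fin 2) k ^ 2) :
    x ^ 2 ∣ scale p := by
  have hmap : (idealOfVars (Fin 2) k).map scale ≤ Ideal.span {x} := by
    rw [Ideal.map_span, Ideal.span_le]
    rintro _ ⟨_, ⟨i, rfl⟩, rfl⟩
    refine Ideal.mem_span_singleton.2 ?_
    fin_cases i <;> simp [scale]
  rw [← Ideal.mem_span_singleton, ← Ideal.span_singleton_pow]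
  refine Ideal.pow_right_mono hmap 2 ?_
  rw [← Ideal.map_pow]
  exact Ideal.mem_map_of_mem scale hp

lemma algHom_ext_of_scale {S : Type*} [CommRing S] [IsDomain S] [Algebra k S]
    {f g : SL2Ring k →ₐ[k] S} (hx0 : f x ≠ 0) (hx : f x = g x)
    (h : ∀ p, f (scale p) = g (scale p)) : f = g := by
  refine algHom_ext_of_x_ne_zero hx0 (mul_left_cancel₀ hx0 ?_) (mul_left_cancel₀ hx0 ?_) hx
  · simpa [scale, hx] using h (X 1)
  · simpa [scale, hx] using h (X 0)

lemma exists_algHom_scale {φ : MvPolynomial (Fin 2) k ≃ₐ[k] MvPolynomial (Fin 2) k}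
    (hφ : IsTangentToId φ) :
    ∃ Φ : SL2Ring k →ₐ[k] SL2Ring k, Φ x = x ∧ ∀ p, Φ (scale p) = scale (φ p) := by
  obtain ⟨a, ha⟩ := x_sq_dvd_scale (hφ 0)
  obtain ⟨b, hb⟩ := x_sq_dvd_scale (hφ 1)
  rw [map_sub] at ha hb
  let Φ : SL2Ring k →ₐ[k] SL2Ring k :=
    lift (t + x * b) (u + x * a) x (y + t * a + u * b + x * a * b) <| by
      linear_combination x_mul_y (k := k)
  have h : Φ.comp scale = scale.comp φ.toAlgHom := MvPolynomial.algHom_ext fun i => by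
    fin_cases i
    · simp only [scale, Fin.zero_eta, AlgHom.comp_apply, AlgEquiv.coe_toAlgHom, aeval_X,
        Matrix.cons_val_zero, map_mul, lift_x, lift_u, Φ] at ha ⊢
      linear_combination -ha
    · simp only [scale, Fin.mk_one, AlgHom.comp_apply, AlgEquiv.coe_toAlgHom, aeval_X,
        Matrix.cons_val_one, Matrix.cons_val_fin_one, map_mul, lift_x, lift_t, Φ] at hb ⊢
      linear_combination -hb
  exact ⟨Φ, lift_x .., fun p => DFunLike.congr_fun h p⟩

lemma mem_extendable_of_isTangentToId
    {φ : MvPolynomial (Fin 2) k ≃ₐ[k] MvPolynomial (Fin 2) k}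
    (hφ : IsTangentToId φ) : φ ∈ extendable k := by
  obtain ⟨Φ, hΦx, hΦ⟩ := exists_algHom_scale hφ
  obtain ⟨Ψ, hΨx, hΨ⟩ := exists_algHom_scale hφ.symm
  refine ⟨.ofAlgHom Φ Ψ (algHom_ext_of_scale ?_ ?_ fun p => ?_)
    (algHom_ext_of_scale ?_ ?_ fun p => ?_), algHom_ext_of_scale ?_ ?_ fun p => ?_⟩
  all_goals simp [hΦx, hΨx, hΦ, hΨ, x_ne_zero, rho1Star_x, rho1Star_scale]

/-- The endomorphism of `SL₂` adding `p(t)` times the first row to the second one. -/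
def shearHom (p : Polynomial k) : SL2Ring k →ₐ[k] SL2Ring k :=
  lift t (u + x * Polynomial.aeval t p) x (y + t * Polynomial.aeval t p) <| by
    linear_combination x_mul_y (k := k)

lemma shearHom_comp_neg (p : Polynomial k) :
    (shearHom p).comp (shearHom (-p)) = AlgHom.id k _ := by
  have ht : shearHom p (Polynomial.aeval t (-p)) = -Polynomial.aeval t p := by
    rw [← Polynomial.aeval_algHom_apply, shearHom, lift_t, map_neg]
  apply algHom_ext <;> simp only [AlgHom.comp_apply, AlgHom.id_apply]
  all_goals nth_rewrite 2 [shearHom]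
  all_goals simp only [lift_t, lift_u, lift_x, lift_y, map_add, map_mul, ht]
  all_goals simp only [shearHom, lift_t, lift_u, lift_x, lift_y]
  all_goals ring

/-- The shears `u ↦ u + x p(t)` of `SL₂`. -/
def shear (p : Polynomial k) : SL2Ring k ≃ₐ[k] SL2Ring k :=
  .ofAlgHom (shearHom p) (shearHom (-p)) (shearHom_comp_neg p)
    (by simpa using shearHom_comp_neg (-p))

@[simp] lemma shear_t (p : Polynomial k) : shear p t = t := by simp [shear, shearHom]

@[simp] lemma shear_u (p : Polynomial k) : shear p u = u + x * Polynomial.aeval t p := by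
  simp [shear, shearHom]

@[simp] lemma shear_x (p : Polynomial k) : shear p x = x := by simp [shear, shearHom]

lemma exists_mem_extendable_swap : ∃ φ ∈ extendable k, φ (X 0) = X 1 ∧ φ (X 1) = X 0 := by
  obtain ⟨φ, hφ, h⟩ := exists_mem_extendable (Φ := transpose (k := k)) (by simp)
  exact ⟨φ, hφ, by simpa [rho1Star_t, rho1Star_u] using h u,
    by simpa [rho1Star_t, rho1Star_u] using h t⟩

lemma exists_mem_extendable_shear {i j : Fin 2} (hij : i ≠ j) (p : Polynomial k) :
    ∃ φ ∈ extendable k, φ (X i) = X i + Polynomial.aeval (X j) p ∧ φ (X j) = X j := by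
  obtain ⟨φ, hφ, h⟩ := exists_mem_extendable (Φ := shear p) (by simp)
  have h0 : φ (X 0) = X 0 + Polynomial.aeval (X 1) p := by
    simpa [rho1Star_t, rho1Star_u, rho1Star_x, ← Polynomial.aeval_algHom_apply] using h u
  have h1 : φ (X 1) = X 1 := by simpa [rho1Star_t] using h t
  obtain ⟨σ, hσ, hσ0, hσ1⟩ := exists_mem_extendable_swap (k := k)
  obtain ⟨rfl, rfl⟩ | ⟨rfl, rfl⟩ : i = 0 ∧ j = 1 ∨ i = 1 ∧ j = 0 := by lia
  · exact ⟨φ, hφ, h0, h1⟩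
  · refine ⟨σ * φ * σ, mul_mem (mul_mem hσ hφ) hσ, ?_, ?_⟩ <;>
      simp [AlgEquiv.mul_apply, hσ0, hσ1, h0, h1, ← Polynomial.aeval_algHom_apply]

lemma exists_mem_extendable_translation (c : Fin 2 → k) :
    ∃ τ ∈ extendable k, ∀ i, τ (X i) = X i + C (c i) := by
  obtain ⟨φ, hφ, h0, h1⟩ := exists_mem_extendable_shear zero_ne_one (Polynomial.C (c 0))
  obtain ⟨ψ, hψ, h1', h0'⟩ := exists_mem_extendable_shear one_ne_zero (Polynomial.C (c 1))
  refine ⟨φ * ψ, mul_mem hφ hψ, Fin.forall_fin_two.2 ⟨?_, ?_⟩⟩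
  all_goals simp only [AlgEquiv.mul_apply, h0, h1, h0', h1', map_add, Polynomial.aeval_C,
    AlgEquiv.commutes, ← algebraMap_eq]

lemma exists_mem_extendable_linear (A : Matrix.SpecialLinearGroup (Fin 2) k) :
    ∃ ψ ∈ extendable k, ∀ i, ψ (X i) = ∑ j, A i j • X j := by
  induction A using Matrix.SL2.transvection_induction with
  | htransvec i j hij c =>
    obtain ⟨ψ, hψ, hi, hj⟩ := exists_mem_extendable_shear hij (c • (Polynomial.X : Polynomial k))
    refine ⟨ψ, hψ, Fin.forall_fin_two.2 ?_⟩
    obtain ⟨rfl, rfl⟩ | ⟨rfl, rfl⟩ : i = 0 ∧ j = 1 ∨ i = 1 ∧ j = 0 := by lia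
    all_goals simp [hi, hj, Matrix.SpecialLinearGroup.transvection_coe, add_comm]
  | hmul A B hA hB =>
    obtain ⟨φ, hφ, hφX⟩ := hA
    obtain ⟨ψ, hψ, hψX⟩ := hB
    refine ⟨ψ * φ, mul_mem hψ hφ, fun i => ?_⟩
    simp only [AlgEquiv.mul_apply, hφX, map_sum, map_smul, hψX]
    simp only [Fin.sum_univ_two, Matrix.SpecialLinearGroup.coe_mul, Matrix.mul_apply]
    module

lemma exists_mem_extendable_affine (A : Matrix.SpecialLinearGroup (Fin 2) k) (c : Fin 2 → k) :
    ∃ ψ ∈ extendable k, ∀ i, ψ (X i) = ∑ j, A i j • (X j + C (c j)) := by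
  obtain ⟨ψ, hψ, hψX⟩ := exists_mem_extendable_linear A
  obtain ⟨τ, hτ, hτX⟩ := exists_mem_extendable_translation c
  refine ⟨τ * ψ, mul_mem hτ hψ, fun i => ?_⟩
  simp only [AlgEquiv.mul_apply, hψX, hτX, map_sum, map_smul]

lemma mem_extendable_of_jacobian_eq_one
    {φ : MvPolynomial (Fin 2) k ≃ₐ[k] MvPolynomial (Fin 2) k}
    (hφ : jacobian 0 1 (φ (X 0)) (φ (X 1)) = 1) : φ ∈ extendable k := by
  let A : Matrix.SpecialLinearGroup (Fin 2) k :=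
    ⟨.of fun i j => constantCoeff (pderiv j (φ (X i))), by
      simpa [Matrix.det_fin_two, jacobian] using congrArg constantCoeff hφ⟩
  obtain ⟨β, hβ, hβX⟩ :=
    exists_mem_extendable_affine A⁻¹ fun j => -constantCoeff (φ (X j))
  have hA (i : Fin 2) : ∑ j, A⁻¹ i j • ∑ l, A j l • X l = (X i : MvPolynomial (Fin 2) k) := by
    simp_rw [Finset.smul_sum, smul_smul]
    rw [Finset.sum_comm]
    simp_rw [← Finset.sum_smul, ← Matrix.mul_apply, ← Matrix.SpecialLinearGroup.coe_mul,
      inv_mul_cancel]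
    simp [Matrix.one_apply]
  suffices IsTangentToId (φ * β) from
    (Subgroup.mul_mem_cancel_right _ hβ).1 (mem_extendable_of_isTangentToId this)
  intro i
  have hβφ : (φ * β) (X i) - X i = ∑ j, A⁻¹ i j •
      (φ (X j) - C (constantCoeff (φ (X j))) - ∑ l, A j l • X l) := by
    simp only [AlgEquiv.mul_apply, hβX, map_sum, map_smul, map_add, map_neg, ← algebraMap_eq,
      AlgEquiv.commutes]
    simp only [← sub_eq_add_neg, smul_sub, Finset.sum_sub_distrib, hA]
  rw [hβφ]
  exact sum_mem fun j _ =>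
    Submodule.smul_of_tower_mem _ _ (sub_linear_mem_idealOfVars_sq (φ (X j)))

lemma mem_extendable_of_jacobian_eq_neg_one
    {φ : MvPolynomial (Fin 2) k ≃ₐ[k] MvPolynomial (Fin 2) k}
    (hφ : jacobian 0 1 (φ (X 0)) (φ (X 1)) = -1) : φ ∈ extendable k := by
  obtain ⟨σ, hσ, hσ0, hσ1⟩ := exists_mem_extendable_swap (k := k)
  refine (Subgroup.mul_mem_cancel_right _ hσ).1 (mem_extendable_of_jacobian_eq_one ?_)
  rw [AlgEquiv.mul_apply, AlgEquiv.mul_apply, hσ0, hσ1, jacobian_swap, hφ, neg_neg]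

end SL2Ring

/-- **Theorem 2 (Blanc–van Santen).** An automorphism `φ` of `𝔸² = Spec k[s,t]` extends to an
automorphism of `SL₂` via the standard embedding `ρ₁` if and only if its Jacobian determinant
`(∂f/∂s)(∂g/∂t) − (∂f/∂t)(∂g/∂s)` (where `f = φ(s)`, `g = φ(t)`) equals `1` or `-1`. -/
theorem extends_iff_jacobian_eq_pm_one
    (φ : MvPolynomial (Fin 2) k ≃ₐ[k] MvPolynomial (Fin 2) k) :
    (∃ Φ : SL2Ring k ≃ₐ[k] SL2Ring k,
        φ.toAlgHom.comp (rho1Star k) = (rho1Star k).comp Φ.toAlgHom) ↔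
      (pderiv 0 (φ (X 0)) * pderiv 1 (φ (X 1)) - pderiv 1 (φ (X 0)) * pderiv 0 (φ (X 1)) = 1 ∨
       pderiv 0 (φ (X 0)) * pderiv 1 (φ (X 1)) - pderiv 1 (φ (X 0)) * pderiv 0 (φ (X 1)) = -1) := by
  constructor
  · rintro ⟨Φ, hΦ⟩
    exact SL2Ring.jacobian_eq_one_or_neg_one_of_extends (DFunLike.congr_fun hΦ)
  · rintro (h | h)
    · exact SL2Ring.mem_extendable_of_jacobian_eq_one h
    · exact SL2Ring.mem_extendable_of_jacobian_eq_neg_one h
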